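/- Let n ≥ 1 and let F : (Fin n → Bool) → Bool be computed by a DNF formula with at most n clauses over n variables. Then there exist a finite type Q with |Q| ≤ 2n² + 1 and a deterministic finite automaton over the alphabet Bool with state type Q such that for every x : Fin n → Bool, the automaton accepts the word of length n² consisting of n consecutive copies of the string x(0)x(1)⋯x(n−1) if and only if F(x) = true. -/

import Mathlib

/-- A DNF clause over `n` variables is a list of literals `[z_v = c]` (a variable
together with a required Boolean value); it evaluates to `1` on `x` iff every
listed variable has its specified value. -/
def evalClause (c : List (Fin n × Bool)) (x : Fin n → Bool) : Bool :=
  c.all fun l => x l.1 == l.2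

/-- A DNF formula is a disjunction of DNF clauses. -/
def evalDNF (φ : List (List (Fin n × Bool))) (x : Fin n → Bool) : Bool :=
  φ.any fun c => evalClause c x

def dnfStep (n : ℕ) (hn : 0 < n) (ok : ℕ → ℕ → Bool → Bool) :
    Option (Fin n × Fin n × Bool) → Bool → Option (Fin n × Fin n × Bool)
  | none, _ => none
  | some (i, j, s), b =>
    if h : j.1 + 1 < n then some (i, ⟨j.1 + 1, h⟩, s && ok i j b)
    else if (s && ok i j b) = true then none
    else if h : i.1 + 1 < n then some (⟨i.1 + 1, h⟩, ⟨0, hn⟩, true)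
    else some (⟨0, hn⟩, ⟨0, hn⟩, true)

def dnfNext (n : ℕ) (hn : 0 < n) (i : Fin n) : Option (Fin n × Fin n × Bool) :=
  if h : i.1 + 1 < n then some (⟨i.1 + 1, h⟩, ⟨0, hn⟩, true)
  else some (⟨0, hn⟩, ⟨0, hn⟩, true)

theorem dnf_fold_none (n : ℕ) (hn : 0 < n) (ok : ℕ → ℕ → Bool → Bool) (w : List Bool) :
    w.foldl (dnfStep n hn ok) none = none := by
  induction w with
  | nil => rfl
  | cons a w ih => simpa [dnfStep] using ih

open Classical in
theorem dnf_fold_block (n : ℕ) (hn : 0 < n) (ok : ℕ → ℕ → Bool → Bool) (x : Fin n → Bool)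
    (i : Fin n) (k : ℕ) : ∀ (j : Fin n) (s : Bool), j.1 + k + 1 = n →
    (((List.finRange n).map x).drop j.1).foldl (dnfStep n hn ok) (some (i, j, s)) =
      if s = true ∧ ∀ j' : Fin n, j.1 ≤ j'.1 → ok i j' (x j') = true then none
      else dnfNext n hn i := by
  induction k with
  | zero =>
    intro j s hj
    rw [List.drop_eq_getElem_cons (by simp), List.drop_eq_nil_of_le (by simp; omega)]
    have hl : ¬ (j.1 + 1 < n) := by omega
    have e : (s = true ∧ ∀ j' : Fin n, j.1 ≤ j'.1 → ok i j' (x j') = true) ↔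
        (s && ok i j (x j)) = true := by
      rw [Bool.and_eq_true]
      refine and_congr_right fun _ => ⟨fun h => h j le_rfl, fun h j' hj' => ?_⟩
      have : j' = j := Fin.ext (by omega)
      rw [this]; exact h
    simp only [e]
    simp [dnfStep, hl, dnfNext]
  | succ k ih =>
    intro j s hj
    have hl : j.1 + 1 < n := by omega
    rw [List.drop_eq_getElem_cons (by simp)]
    have := ih ⟨j.1 + 1, hl⟩ (s && ok i j (x j)) (by simp; omega)
    have e : (s = true ∧ ∀ j' : Fin n, j.1 ≤ j'.1 → ok i j' (x j') = true) ↔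
        ((s && ok i j (x j)) = true ∧ ∀ j' : Fin n, j.1 + 1 ≤ j'.1 → ok i j' (x j') = true) := by
      rw [Bool.and_eq_true, and_assoc]
      refine and_congr_right fun _ => ⟨fun h => ⟨h j le_rfl, fun j' h' => h j' (by omega)⟩,
        fun h j' hj' => ?_⟩
      rcases Nat.eq_or_lt_of_le hj' with h' | h'
      · have : j' = j := Fin.ext h'.symm
        rw [this]; exact h.1
      · exact h.2 j' h'
    simp only [e]
    rw [← this]
    simp [dnfStep, hl]

theorem dnf_fold_all (n : ℕ) (hn : 0 < n) (ok : ℕ → ℕ → Bool → Bool) (x : Fin n → Bool)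
    (m : ℕ) : ∀ i : Fin n, i.1 + m + 1 = n →
    ((List.replicate (m + 1) ((List.finRange n).map x)).flatten.foldl (dnfStep n hn ok)
      (some (i, ⟨0, hn⟩, true)) = none ↔
      ∃ i' : Fin n, i.1 ≤ i'.1 ∧ ∀ j : Fin n, ok i' j (x j) = true) := by
  induction m with
  | zero =>
    intro i hi
    have hb := dnf_fold_block n hn ok x i (n - 1) ⟨0, hn⟩ true (by simp; omega)
    simp only [List.drop_zero] at hb
    simp only [zero_add, List.replicate_one, List.flatten_singleton]
    rw [hb]
    have hl : ¬ (i.1 + 1 < n) := by omega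
    constructor
    · intro h
      split_ifs at h with h1
      · exact ⟨i, le_rfl, fun j => h1.2 j (Nat.zero_le _)⟩
      · simp [dnfNext, hl] at h
    · rintro ⟨i', h1, h2⟩
      have : i' = i := Fin.ext (by omega)
      subst this
      rw [if_pos ⟨trivial, fun j _ => h2 j⟩]
  | succ m ih =>
    intro i hi
    have hl : i.1 + 1 < n := by omega
    have hb := dnf_fold_block n hn ok x i (n - 1) ⟨0, hn⟩ true (by simp; omega)
    simp only [List.drop_zero] at hb
    rw [List.replicate_succ, List.flatten_cons, List.foldl_append, hb]
    split_ifs with h1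
    · simp only [dnf_fold_none, true_iff]
      exact ⟨i, le_rfl, fun j => h1.2 j (Nat.zero_le _)⟩
    · rw [dnfNext, dif_pos hl, ih ⟨i.1 + 1, hl⟩ (by simp; omega)]
      constructor
      · rintro ⟨i', h, h'⟩
        exact ⟨i', by simp at h; omega, h'⟩
      · rintro ⟨i', h, h'⟩
        refine ⟨i', ?_, h'⟩
        rcases Nat.eq_or_lt_of_le h with h2 | h2
        · have : i' = i := Fin.ext h2.symm
          subst this
          exact absurd ⟨trivial, fun j _ => h' j⟩ h1
        · exact h2

def dnfOk {n : ℕ} (φ : List (List (Fin n × Bool))) (i j : ℕ) (b : Bool) : Bool :=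
  if h : i < φ.length then φ[i].all fun l => !(decide (l.1.1 = j)) || (b == l.2) else false

/-- Section 4 of the paper: if `F : {0,1}^n → {0,1}` is computed by a DNF formula
with at most `n` clauses over `n` variables, then there is a deterministic finite
automaton over the alphabet `Bool`, with at most `2n² + 1` states, accepting the
word consisting of `n` consecutive copies of `x(0)⋯x(n−1)` iff `F(x) = 1`. -/
theorem dnf_to_automaton (n : ℕ) (hn : 1 ≤ n) (F : (Fin n → Bool) → Bool)
    (φ : List (List (Fin n × Bool))) (hφ : φ.length ≤ n)
    (hF : ∀ x, F x = evalDNF φ x) :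
    ∃ (Q : Type) (inst : Fintype Q) (M : DFA Bool Q),
      @Fintype.card Q inst ≤ 2 * n ^ 2 + 1 ∧
      ∀ x : Fin n → Bool,
        ((List.replicate n ((List.finRange n).map x)).flatten ∈ M.accepts ↔
          F x = true) := by
  refine ⟨Option (Fin n × Fin n × Bool), inferInstance,
    ⟨dnfStep n hn (dnfOk φ), some (⟨0, hn⟩, ⟨0, hn⟩, true), {none}⟩, ?_, ?_⟩
  · simp only [Fintype.card_option, Fintype.card_prod, Fintype.card_fin, Fintype.card_bool]
    apply le_of_eq
    ring
  · intro x
    have h := dnf_fold_all n hn (dnfOk φ) x (n - 1) ⟨0, hn⟩ (by simp; omega)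
    rw [Nat.sub_add_cancel hn] at h
    rw [DFA.mem_accepts]
    refine Iff.trans h ?_
    rw [hF, evalDNF, List.any_eq_true]
    constructor
    · rintro ⟨i, -, hi⟩
      by_cases hl : i.1 < φ.length
      · refine ⟨φ[i.1], List.getElem_mem hl, ?_⟩
        rw [evalClause, List.all_eq_true]
        intro l hm
        have := hi l.1
        rw [dnfOk, dif_pos hl, List.all_eq_true] at this
        simpa using this l hm
      · have := hi ⟨0, hn⟩
        simp [dnfOk, hl] at this
    · rintro ⟨c, hc, hx⟩
      obtain ⟨i, hl, rfl⟩ := List.getElem_of_mem hc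
      refine ⟨⟨i, by omega⟩, Nat.zero_le _, fun j => ?_⟩
      rw [evalClause, List.all_eq_true] at hx
      rw [dnfOk, dif_pos hl, List.all_eq_true]
      intro l hm
      have h2 := hx l hm
      by_cases hj : l.1 = j
      · subst hj
        simpa using h2
      · have : l.1.1 ≠ j.1 := fun h => hj (Fin.ext h)
        simp [this]
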